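/- Let j ∈ ℕ and x ∈ ℝ. Then the Hahn–Exton q-Bessel function J^q_j(x) tends to 𝒥_j(x) as q → 1 from below (q ranging over (0,1)), where 𝒥_j(x) = ∑_{m=0}^∞ (−1)^m x^{2m+j}/(m! (m+j)!). -/

import Mathlib

noncomputable section

/-- The q-factorial `(n)_q! = ∏_{k=1}^n (1-q^k)/(1-q)`. -/
def qFact (q : ℝ) (n : ℕ) : ℝ := ∏ k ∈ Finset.range n, (1 - q ^ (k + 1)) / (1 - q)

/-- The q-Pochhammer symbol `(a;q)_k = ∏_{i=0}^{k-1} (1 - a q^i)`. -/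
def qPoch (a q : ℝ) (k : ℕ) : ℝ := ∏ i ∈ Finset.range k, (1 - a * q ^ i)

/-- The q-Kummer function
`Φ^q(a,b;x) = ∑_{k=0}^∞ q^{k(k-1)/2} (a;q)_k / ((q;q)_k (b;q)_k) ((1-q)x)^k`. -/
def qKummer (q a b x : ℝ) : ℝ :=
  ∑' k : ℕ, q ^ (k * (k - 1) / 2) * qPoch a q k / (qPoch q q k * qPoch b q k) * ((1 - q) * x) ^ k

/-- The Hahn–Exton q-Bessel function `J^q_j(x) = (x^j/(j)_q!) Φ^q(0, q^{1+j}; (q-1)q x²)`. -/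
def qBessel (q : ℝ) (j : ℕ) (x : ℝ) : ℝ :=
  x ^ j / qFact q j * qKummer q 0 (q ^ (1 + j)) ((q - 1) * q * x ^ 2)

/-- The Bessel-type function `𝒥_j(x) = ∑_{m=0}^∞ (-1)^m x^{2m+j}/(m!(m+j)!)`,
equal to the classical Bessel function `J_j(2x)`. -/
def besselJJ (j : ℕ) (x : ℝ) : ℝ :=
  ∑' m : ℕ, (-1 : ℝ) ^ m * x ^ (2 * m + j) / (m.factorial * (m + j).factorial)

/-!
Absorbing `(j)_q!` into the Pochhammer symbols turns the `q`-Bessel function into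
`J^q_j(x) = ∑ₘ (-1)^m q^(m(m+1)/2) x^(2m+j) / ((m)_q! (m+j)_q!)`, whose terms converge to those of
`𝒥_j(x)` because `(n)_q! → n!`. Dominated convergence applies because Cauchy–Schwarz for the sum
`(n)_q = ∑ᵢ q^i = ∑ᵢ q^(n-1-i)` gives `n² q^(n-1) ≤ (n)_q²`, hence `(m!)² q^(m(m-1)/2) ≤ (m)_q!²`:
the factorials absorb all but `q^m` of the power of `q`. This works on both sides of `q = 1`.
-/

open Filter Finset
open scoped Nat Topology

/-- The `q`-number `(n)_q`, encoded as the polynomial `1 + q + ⋯ + q^(n-1)` rather than the quotient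
`(1 - q^n) / (1 - q)` so that it has its true value at `q = 1`. -/
def qNum {R : Type*} [Semiring R] (q : R) (n : ℕ) : R := ∑ i ∈ range n, q ^ i

section qNum

variable {R : Type*} [Semiring R]

lemma qNum_one_left (n : ℕ) : qNum (1 : R) n = n := by simp [qNum]

lemma continuous_qNum [TopologicalSpace R] [IsTopologicalSemiring R] (n : ℕ) :
    Continuous fun q : R => qNum q n := by
  unfold qNum
  fun_prop

lemma one_le_qNum_succ [PartialOrder R] [IsOrderedRing R] {q : R} (hq : 0 ≤ q) (n : ℕ) :
    1 ≤ qNum q (n + 1) := by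
  simpa [qNum] using
    single_le_sum (f := fun i => q ^ i) (fun i _ => pow_nonneg hq i) (mem_range.2 n.succ_pos)

lemma qNum_eq_div {K : Type*} [Field K] {q : K} (hq : q ≠ 1) (n : ℕ) :
    qNum q n = (1 - q ^ n) / (1 - q) := by
  rw [eq_div_iff (sub_ne_zero.2 hq.symm)]
  exact geom_sum_mul_neg q n

lemma sq_mul_pow_le_qNum_succ_sq {q : ℝ} (hq : 0 ≤ q) (n : ℕ) :
    (n + 1 : ℝ) ^ 2 * q ^ n ≤ qNum q (n + 1) ^ 2 := by
  have reflect : ∑ i ∈ range (n + 1), q ^ (n - i) = qNum q (n + 1) :=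
    sum_range_reflect (fun i => q ^ i) (n + 1)
  have cauchy_schwarz : (∑ _i ∈ range (n + 1), √q ^ n) ^ 2 ≤
      qNum q (n + 1) * ∑ i ∈ range (n + 1), q ^ (n - i) := by
    refine sum_sq_le_sum_mul_sum_of_sq_le_mul _ (fun i _ => pow_nonneg hq i)
      (fun i _ => pow_nonneg hq (n - i)) fun i hi => le_of_eq ?_
    rw [← pow_add, Nat.add_sub_of_le (mem_range_succ_iff.1 hi), pow_right_comm, Real.sq_sqrt hq]
  calc (n + 1 : ℝ) ^ 2 * q ^ n = (∑ _i ∈ range (n + 1), √q ^ n) ^ 2 := by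
        rw [sum_const, card_range, nsmul_eq_mul, Nat.cast_succ, mul_pow, pow_right_comm,
          Real.sq_sqrt hq]
    _ ≤ qNum q (n + 1) * qNum q (n + 1) := by rwa [reflect] at cauchy_schwarz
    _ = qNum q (n + 1) ^ 2 := (sq _).symm

end qNum

section qFact

variable {q : ℝ}

lemma qFact_eq_prod_qNum (hq : q ≠ 1) (n : ℕ) : qFact q n = ∏ k ∈ range n, qNum q (k + 1) := by
  simp only [qFact, qNum_eq_div hq]

lemma one_le_qFact (hq₀ : 0 ≤ q) (hq : q ≠ 1) (n : ℕ) : 1 ≤ qFact q n := by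
  rw [qFact_eq_prod_qNum hq]
  exact one_le_prod fun k _ => one_le_qNum_succ hq₀ k

lemma monotone_qFact (hq₀ : 0 ≤ q) (hq : q ≠ 1) : Monotone (qFact q) := by
  refine monotone_nat_of_le_succ fun n => ?_
  have qFact_succ : qFact q (n + 1) = qFact q n * qNum q (n + 1) := by
    simp only [qFact_eq_prod_qNum hq, prod_range_succ]
  rw [qFact_succ]
  exact le_mul_of_one_le_right (zero_le_one.trans (one_le_qFact hq₀ hq n)) (one_le_qNum_succ hq₀ n)

lemma factorial_sq_mul_pow_le_qFact_sq (hq₀ : 0 ≤ q) (hq : q ≠ 1) (n : ℕ) :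
    (n ! : ℝ) ^ 2 * q ^ (n * (n - 1) / 2) ≤ qFact q n ^ 2 := by
  rw [qFact_eq_prod_qNum hq, ← prod_range_add_one_eq_factorial, ← sum_range_id,
    ← prod_pow_eq_pow_sum, Nat.cast_prod, ← prod_pow, ← prod_pow, ← prod_mul_distrib]
  exact prod_le_prod (fun k _ => by positivity) fun k _ => by
    simpa only [Nat.cast_succ] using sq_mul_pow_le_qNum_succ_sq hq₀ k

lemma tendsto_qFact (n : ℕ) : Tendsto (fun q => qFact q n) (𝓝[≠] 1) (𝓝 (n ! : ℝ)) := by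
  have limit : ∏ k ∈ range n, qNum (1 : ℝ) (k + 1) = n ! := by
    simp only [qNum_one_left, ← Nat.cast_prod, prod_range_add_one_eq_factorial]
  have continuous_prod : Continuous fun q : ℝ => ∏ k ∈ range n, qNum q (k + 1) :=
    continuous_finsetProd _ fun k _ => continuous_qNum (k + 1)
  rw [← limit]
  refine ((continuous_prod.tendsto 1).mono_left nhdsWithin_le_nhds).congr' ?_
  filter_upwards [self_mem_nhdsWithin] with q hq using (qFact_eq_prod_qNum hq n).symm

end qFact

section qPoch

lemma qPoch_zero_left (q : ℝ) (k : ℕ) : qPoch 0 q k = 1 := by simp [qPoch]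

variable {q : ℝ}

lemma qPoch_pow_mul_qFact (hq : q ≠ 1) (n k : ℕ) :
    qPoch (q ^ (1 + n)) q k * qFact q n = (1 - q) ^ k * qFact q (n + k) := by
  have hq' : 1 - q ≠ 0 := sub_ne_zero.2 hq.symm
  have factor (i : ℕ) : 1 - q ^ (1 + n) * q ^ i = (1 - q) * ((1 - q ^ (n + i + 1)) / (1 - q)) := by
    rw [mul_div_cancel₀ _ hq', ← pow_add, show 1 + n + i = n + i + 1 by ring]
  simp only [qPoch, qFact, factor, prod_range_add, prod_mul_distrib, prod_const, card_range]
  ring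

lemma qPoch_self (hq : q ≠ 1) (k : ℕ) : qPoch q q k = (1 - q) ^ k * qFact q k := by
  simpa [qFact] using qPoch_pow_mul_qFact hq 0 k

end qPoch

/-- The `m`-th term of the Hahn–Exton series once `(j)_q!` has been absorbed into its denominators:
the `q`-analogue of the `m`-th term of `𝒥_j(x)`. The exponent `m(m+1)/2` of `q` is split so that
`(m)_q!²` dominates its first summand. -/
def qBesselTerm (q : ℝ) (j : ℕ) (x : ℝ) (m : ℕ) : ℝ :=
  (-1) ^ m * q ^ (m * (m - 1) / 2 + m) * x ^ (2 * m + j) / (qFact q m * qFact q (m + j))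

section qBessel

variable {q : ℝ}

lemma qBessel_eq_tsum (hq : q ≠ 1) (j : ℕ) (x : ℝ) :
    qBessel q j x = ∑' m, qBesselTerm q j x m := by
  rw [qBessel, qKummer, ← tsum_mul_left]
  refine tsum_congr fun m => ?_
  have hq' : (1 - q) ^ m * (1 - q) ^ m ≠ 0 := by
    have := sub_ne_zero.2 hq.symm
    positivity
  have denominator : qFact q j * (qPoch q q m * qPoch (q ^ (1 + j)) q m) =
      (1 - q) ^ m * (1 - q) ^ m * (qFact q m * qFact q (m + j)) := by
    rw [mul_comm, mul_assoc, qPoch_pow_mul_qFact hq, qPoch_self hq, add_comm j]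
    ring
  have power : ((1 - q) * ((q - 1) * q * x ^ 2)) ^ m =
      (1 - q) ^ m * (1 - q) ^ m * ((-1) ^ m * q ^ m * x ^ (2 * m)) := by
    rw [pow_mul]
    simp only [← mul_pow]
    ring
  rw [qPoch_zero_left, mul_one, ← mul_assoc, div_mul_div_comm, div_mul_eq_mul_div, denominator,
    power, qBesselTerm, mul_left_comm, mul_div_mul_left _ _ hq']
  ring

lemma tendsto_qBesselTerm (j : ℕ) (x : ℝ) (m : ℕ) :
    Tendsto (fun q => qBesselTerm q j x m) (𝓝[≠] 1)
      (𝓝 ((-1) ^ m * x ^ (2 * m + j) / (m ! * (m + j)!))) := by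
  have numerator : Tendsto (fun q : ℝ => (-1) ^ m * q ^ (m * (m - 1) / 2 + m) * x ^ (2 * m + j))
      (𝓝[≠] 1) (𝓝 ((-1) ^ m * x ^ (2 * m + j))) :=
    (Continuous.tendsto' (by fun_prop) 1 _ (by simp)).mono_left nhdsWithin_le_nhds
  exact numerator.div ((tendsto_qFact m).mul (tendsto_qFact (m + j))) (by positivity)

lemma norm_qBesselTerm_le (hq₀ : 0 ≤ q) (hq : q ≠ 1) (j : ℕ) (x : ℝ) (m : ℕ) :
    ‖qBesselTerm q j x m‖ ≤ |x| ^ j * ((q * x ^ 2) ^ m / (m ! : ℝ) ^ 2) := by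
  have hm : 0 < qFact q m := zero_lt_one.trans_le (one_le_qFact hq₀ hq m)
  have hmj : 0 < qFact q (m + j) := zero_lt_one.trans_le (one_le_qFact hq₀ hq (m + j))
  have denominator : (m ! : ℝ) ^ 2 * q ^ (m * (m - 1) / 2) ≤ qFact q m * qFact q (m + j) :=
    calc (m ! : ℝ) ^ 2 * q ^ (m * (m - 1) / 2) ≤ qFact q m * qFact q m := by
          simpa only [sq] using factorial_sq_mul_pow_le_qFact_sq hq₀ hq m
      _ ≤ qFact q m * qFact q (m + j) :=
          mul_le_mul_of_nonneg_left (monotone_qFact hq₀ hq (m.le_add_right j)) hm.le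
  have norm_eq : ‖qBesselTerm q j x m‖ = |x| ^ j * (q * x ^ 2) ^ m * q ^ (m * (m - 1) / 2) /
      (qFact q m * qFact q (m + j)) := by
    simp only [qBesselTerm, norm_div, norm_mul, norm_pow, norm_neg, norm_one, one_pow,
      Real.norm_eq_abs, abs_of_nonneg hq₀, abs_of_pos hm, abs_of_pos hmj, pow_add, pow_mul, sq_abs]
    ring
  rw [norm_eq, ← mul_div_assoc, div_le_div_iff₀ (by positivity) (by positivity), mul_assoc,
    mul_comm (q ^ _)]
  exact mul_le_mul_of_nonneg_left denominator (by positivity)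

end qBessel

lemma summable_pow_div_factorial_sq (y : ℝ) : Summable fun m : ℕ => y ^ m / (m ! : ℝ) ^ 2 := by
  refine (Real.summable_pow_div_factorial |y|).of_norm_bounded fun m => ?_
  rw [norm_div, norm_pow, Real.norm_eq_abs, Real.norm_of_nonneg (by positivity)]
  gcongr
  exact le_self_pow₀ (mod_cast m.factorial_pos) two_ne_zero

theorem qBessel_tendsto_bessel_general (j : ℕ) (x : ℝ) :
    Tendsto (fun q : ℝ => qBessel q j x) (𝓝[≠] 1) (𝓝 (besselJJ j x)) := by
  have near_one : ∀ᶠ q : ℝ in 𝓝[≠] 1, q ∈ Set.Ioo 0 2 :=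
    nhdsWithin_le_nhds (Ioo_mem_nhds one_pos one_lt_two)
  have dominated : ∀ᶠ q in 𝓝[≠] 1, ∀ m,
      ‖qBesselTerm q j x m‖ ≤ |x| ^ j * ((2 * x ^ 2) ^ m / (m ! : ℝ) ^ 2) := by
    filter_upwards [near_one, self_mem_nhdsWithin] with q ⟨hq₀, hq₂⟩ hq m
    refine (norm_qBesselTerm_le hq₀.le hq j x m).trans ?_
    gcongr
  refine (tendsto_tsum_of_dominated_convergence
    ((summable_pow_div_factorial_sq (2 * x ^ 2)).mul_left (|x| ^ j))
    (tendsto_qBesselTerm j x) dominated).congr' ?_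
  filter_upwards [self_mem_nhdsWithin] with q hq using (qBessel_eq_tsum hq j x).symm

/-- the Hahn–Exton q-Bessel function `J^q_j(x)` tends to `𝒥_j(x)`
as `q → 1⁻` within `(0,1)`. -/
theorem qBessel_tendsto_bessel (j : ℕ) (x : ℝ) :
    Filter.Tendsto (fun q : ℝ => qBessel q j x)
      (nhdsWithin 1 (Set.Ioo 0 1)) (nhds (besselJJ j x)) := by
  exact (qBessel_tendsto_bessel_general j x).mono_left (nhdsWithin_mono 1 fun _ hq => hq.2.ne)
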